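/- arXiv:1905.02160 — 3 statements merged into one kernel-verified Lean document; each statement's English description precedes it below -/
import Mathlib

section
/- (Ultra-Ellentuck theorem for FIN_{±k}^[∞].) Let 𝒰 be a cofinite subsymmetric ultrafilter on FIN_{±k} with 𝒰 + (−T)^j 𝒰 = (−T)^j 𝒰 + 𝒰 = 𝒰 for all j ≤ k. Then a set 𝒳 ⊆ FIN_{±k}^[∞] has the property of Baire relative to the 𝒰-topology if and only if 𝒳 is 𝒰-Ramsey; moreover, 𝒳 is meager with respect to the 𝒰-topology if and only if 𝒳 is 𝒰-Ramsey null. -/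
open Function Set

/-- `p` is an element of `FIN_{±k}`: finitely supported, values in `{0, ±1, …, ±k}`,
attaining one of the values `±k`. -/
def IsFin (k : ℕ) (p : ℕ → ℤ) : Prop :=
  (Function.support p).Finite ∧ (∀ n, |p n| ≤ (k : ℤ)) ∧ (∃ n, |p n| = (k : ℤ))

/-- `p < q` in the block ordering: every point of `supp p` precedes every point of `supp q`. -/
def BlockLt (p q : ℕ → ℤ) : Prop :=
  ∀ m n : ℕ, p m ≠ 0 → q n ≠ 0 → m < n

/-- The tetris operation `T`. -/
def tetris (p : ℕ → ℤ) : ℕ → ℤ := fun n =>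
  if 0 < p n then p n - 1 else if p n < 0 then p n + 1 else 0

/-- The sign-flipped tetris operation `-T`. -/
def negT (p : ℕ → ℤ) : ℕ → ℤ := -(tetris p)

/-- The weak tetris operation `S`. -/
def Sop (p : ℕ → ℤ) : ℕ → ℤ := fun n => if |p n| = 1 then 0 else p n

/-- `‖p‖ ≤ c` for the `ℓ∞` norm. -/
def normLe (p : ℕ → ℤ) (c : ℕ) : Prop := ∀ n, |p n| ≤ (c : ℤ)

/-- `(A)_c`, the `c`-fattening of `A`. -/
def approx (c : ℕ) (A : Set (ℕ → ℤ)) : Set (ℕ → ℤ) :=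
  {p | ∃ q ∈ A, normLe (p - q) c}

/-- `P` is an infinite block sequence in `FIN_{±k}`. -/
def IsBlockSeq (k : ℕ) (P : ℕ → ℕ → ℤ) : Prop :=
  (∀ n, IsFin k (P n)) ∧ ∀ m n : ℕ, m < n → BlockLt (P m) (P n)

/-- `t` is a finite block sequence in `FIN_{±k}` (coded as a list). -/
def IsFinBlockSeq (k : ℕ) (t : List (ℕ → ℤ)) : Prop :=
  (∀ p ∈ t, IsFin k p) ∧ t.Pairwise BlockLt

/-- `q ∈ ⟨P⟩_{±k}`: `q = ε₀T^{j₀}(p_{n₀}) + ⋯ + ε_m T^{j_m}(p_{n_m})` with `n₀ < ⋯ < n_m`,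
`εᵢ ∈ {±1}`, `jᵢ < k` and `min jᵢ = 0`. -/
def InSpanPM (k : ℕ) (P : ℕ → ℕ → ℤ) (q : ℕ → ℤ) : Prop :=
  ∃ (m : ℕ) (n : Fin (m + 1) → ℕ) (ε : Fin (m + 1) → ℤ) (j : Fin (m + 1) → ℕ),
    StrictMono n ∧ (∀ i, ε i = 1 ∨ ε i = -1) ∧ (∀ i, j i < k) ∧ (∃ i, j i = 0) ∧
    q = ∑ i, ε i • tetris^[j i] (P (n i))

/-- `q ∈ ⟨P⟩_{(−T)}`. -/
def InSpanNegT (k : ℕ) (P : ℕ → ℕ → ℤ) (q : ℕ → ℤ) : Prop :=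
  ∃ (m : ℕ) (n : Fin (m + 1) → ℕ) (j : Fin (m + 1) → ℕ),
    StrictMono n ∧ (∀ i, j i < k) ∧ (∃ i, j i = 0) ∧
    q = ∑ i, negT^[j i] (P (n i))

/-- `q ∈ ⟨p_a, …, p_b⟩_{(−T)}`. -/
def InSpanNegTRange (k : ℕ) (P : ℕ → ℕ → ℤ) (a b : ℕ) (q : ℕ → ℤ) : Prop :=
  ∃ (m : ℕ) (n : Fin (m + 1) → ℕ) (j : Fin (m + 1) → ℕ),
    StrictMono n ∧ (∀ i, a ≤ n i ∧ n i ≤ b) ∧ (∀ i, j i < k) ∧ (∃ i, j i = 0) ∧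
    q = ∑ i, negT^[j i] (P (n i))

/-- A cofinite ultrafilter on `FIN_{±k}` (coded as an ultrafilter on `ℕ → ℤ`
concentrating on `FIN_{±k}`). -/
def IsCofiniteUF (k : ℕ) (𝒰 : Ultrafilter (ℕ → ℤ)) : Prop :=
  {p | IsFin k p} ∈ 𝒰 ∧ ∀ m : ℕ, {p : ℕ → ℤ | ∀ n < m, p n = 0} ∈ 𝒰

/-- `A ∈ 𝒰 + 𝒱`. -/
def SumMem (𝒰 𝒱 : Ultrafilter (ℕ → ℤ)) (A : Set (ℕ → ℤ)) : Prop :=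
  {p | {q | BlockLt p q ∧ p + q ∈ A} ∈ 𝒱} ∈ 𝒰

/-- `𝒰` is subsymmetric: `A ∈ 𝒰` implies `−(A)₁ ∈ 𝒰`. -/
def IsSubsymmetric (𝒰 : Ultrafilter (ℕ → ℤ)) : Prop :=
  ∀ A ∈ 𝒰, {p : ℕ → ℤ | -p ∈ approx 1 A} ∈ 𝒰

/-- `𝒰 + (−T)^j 𝒰 = (−T)^j 𝒰 + 𝒰 = 𝒰` for all `j ≤ k`. -/
def IsIdempotentUF (k : ℕ) (𝒰 : Ultrafilter (ℕ → ℤ)) : Prop :=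
  ∀ j ≤ k, ∀ A : Set (ℕ → ℤ),
    (SumMem 𝒰 (Ultrafilter.map (negT^[j]) 𝒰) A ↔ A ∈ 𝒰) ∧
    (SumMem (Ultrafilter.map (negT^[j]) 𝒰) 𝒰 A ↔ A ∈ 𝒰)

/-- A cofinite subsymmetric ultrafilter on `FIN_{±k}` idempotent with respect to
all the maps `(−T)^j`, `j ≤ k`. -/
def IsGowersUF (k : ℕ) (𝒰 : Ultrafilter (ℕ → ℤ)) : Prop :=
  IsCofiniteUF k 𝒰 ∧ IsSubsymmetric 𝒰 ∧ IsIdempotentUF k 𝒰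

/-- A `𝒰`-tree on `FIN_{±k}` with stem `s`. -/
structure IsUTree (k : ℕ) (𝒰 : Ultrafilter (ℕ → ℤ)) (U : Set (List (ℕ → ℤ)))
    (s : List (ℕ → ℤ)) : Prop where
  blocks : ∀ t ∈ U, IsFinBlockSeq k t
  prefixClosed : ∀ t ∈ U, ∀ t' : List (ℕ → ℤ), t' <+: t → t' ∈ U
  stemMem : s ∈ U
  stemComparable : ∀ t ∈ U, s <+: t ∨ t <+: s
  branch : ∀ t ∈ U, s <+: t → {p | t ++ [p] ∈ U} ∈ 𝒰

/-- `[U]`, the set of infinite branches of a tree of finite block sequences. -/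
def Branches (U : Set (List (ℕ → ℤ))) : Set (ℕ → ℕ → ℤ) :=
  {P | ∀ n : ℕ, (List.ofFn fun i : Fin n => P i.1) ∈ U}

/-- The space `FIN_{±k}^[∞]` of infinite block sequences. -/
def BlockSeq (k : ℕ) : Type := {P : ℕ → ℕ → ℤ // IsBlockSeq k P}

/-- The metrizable topology on `FIN_{±k}^[∞]`, generated by the basic sets `[s]`. -/
instance BlockSeq.topology (k : ℕ) : TopologicalSpace (BlockSeq k) :=
  TopologicalSpace.generateFrom
    {O | ∃ s : List (ℕ → ℤ),
      O = {P : BlockSeq k | ∀ i : Fin s.length, P.1 i.1 = s.get i}}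

/-- The Souslin operation applied to a Souslin scheme. -/
def SouslinOp {α : Type*} (F : List ℕ → Set α) : Set α :=
  ⋃ x : ℕ → ℕ, ⋂ n : ℕ, F (List.ofFn fun i : Fin n => x i.1)

/-- `A` is Souslin measurable: it belongs to every field of sets containing the open
sets and closed under the Souslin operation. -/
def SouslinMeasurable {α : Type*} [TopologicalSpace α] (A : Set α) : Prop :=
  ∀ 𝓕 : Set (Set α),
    (∀ O : Set α, IsOpen O → O ∈ 𝓕) →
    (∀ B ∈ 𝓕, Bᶜ ∈ 𝓕) →
    (∀ B ∈ 𝓕, ∀ C ∈ 𝓕, B ∪ C ∈ 𝓕) →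
    (∀ F : List ℕ → Set α, (∀ s, F s ∈ 𝓕) → SouslinOp F ∈ 𝓕) →
    A ∈ 𝓕

/-- The map `Φ_m : FIN_{±2m} → FIN_{±m}` (its defining formula does not depend on `m`). -/
def Phi (p : ℕ → ℤ) : ℕ → ℤ := fun n =>
  if p n % 2 = 0 then p n / 2
  else if 0 < p n then (p n - 1) / 2
  else (p n + 1) / 2

/-- `Ψ = Φ_k ∘ Φ_{2k} : FIN_{±4k} → FIN_{±k}`. -/
def Psi (p : ℕ → ℤ) : ℕ → ℤ := Phi (Phi p)

/-- The `𝒰`-topology on `FIN_{±k}^[∞]`, generated by the sets `[U]` for `𝒰`-trees `U`. -/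
def uTop (k : ℕ) (𝒰 : Ultrafilter (ℕ → ℤ)) : TopologicalSpace (BlockSeq k) :=
  TopologicalSpace.generateFrom
    {O | ∃ (U : Set (List (ℕ → ℤ))) (s : List (ℕ → ℤ)), IsUTree k 𝒰 U s ∧
      O = {P : BlockSeq k | P.1 ∈ Branches U}}

/-- `[U]` viewed as a set of points of the space `FIN_{±k}^[∞]`. -/
def BranchesB (k : ℕ) (U : Set (List (ℕ → ℤ))) : Set (BlockSeq k) :=
  {P | P.1 ∈ Branches U}

/-- `𝒳` is `𝒰`-Ramsey. -/
def URamsey (k : ℕ) (𝒰 : Ultrafilter (ℕ → ℤ)) (𝒳 : Set (BlockSeq k)) : Prop :=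
  ∀ (U : Set (List (ℕ → ℤ))) (s : List (ℕ → ℤ)), IsUTree k 𝒰 U s →
    ∃ U' : Set (List (ℕ → ℤ)), U' ⊆ U ∧ IsUTree k 𝒰 U' s ∧
      (BranchesB k U' ⊆ 𝒳 ∨ BranchesB k U' ⊆ 𝒳ᶜ)

/-- `𝒳` is `𝒰`-Ramsey null. -/
def URamseyNull (k : ℕ) (𝒰 : Ultrafilter (ℕ → ℤ)) (𝒳 : Set (BlockSeq k)) : Prop :=
  ∀ (U : Set (List (ℕ → ℤ))) (s : List (ℕ → ℤ)), IsUTree k 𝒰 U s →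
    ∃ U' : Set (List (ℕ → ℤ)), U' ⊆ U ∧ IsUTree k 𝒰 U' s ∧ BranchesB k U' ⊆ 𝒳ᶜ

/-!
The proof is combinatorial forcing: call a finite block sequence `s` accepting for `𝒳` when some
`𝒰`-tree with stem `s` has all its branches in `𝒳`. Since `𝒰` is an ultrafilter, a sequence that
does not accept `𝒳` has `𝒰`-many one-step extensions that do not accept `𝒳` either, so every
`𝒰`-tree whose stem does not accept `𝒳` thins out to one none of whose nodes accepts `𝒳`. When `𝒳`
is open, each of its points has an accepting initial segment, hence the thinned tree misses `𝒳`: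
open sets are `𝒰`-Ramsey. The same thinning gives fusion of `𝒰`-trees, so the `𝒰`-Ramsey null sets
form a σ-ideal, and this ideal is that of the nowhere dense sets.
-/

section InitialSegments

variable {α : Type*}

/-- The initial segment `(P 0, …, P (n - 1))` of an infinite sequence, coded as a list in the way
that `Branches` does. -/
abbrev initSeg (P : ℕ → α) (n : ℕ) : List α := List.ofFn fun i : Fin n => P i

theorem initSeg_prefix_initSeg (P : ℕ → α) {m n : ℕ} (h : m ≤ n) : initSeg P m <+: initSeg P n := by
  rw [List.prefix_iff_eq_take]
  apply List.ext_getElem <;> simp [h]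

theorem initSeg_succ (P : ℕ → α) (n : ℕ) : initSeg P (n + 1) = initSeg P n ++ [P n] :=
  List.ofFn_succ_last

theorem exists_initSeg_add_eq_append (s : List α) (x : ℕ → α) :
    ∃ P : ℕ → α, ∀ n, initSeg P (s.length + n) = s ++ initSeg x n := by
  refine ⟨fun i => s.getD i (x (i - s.length)), fun n => ?_⟩
  apply List.ext_getElem
  · simp
  · intro i _ _
    by_cases hi : i < s.length <;> simp [List.getElem_append, hi]

end InitialSegments

section UltraEllentuck

open scoped Topology

variable {k : ℕ} {𝒰 : Ultrafilter (ℕ → ℤ)}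

theorem isBlockSeq_iff_forall_initSeg {P : ℕ → ℕ → ℤ} :
    IsBlockSeq k P ↔ ∀ n, IsFinBlockSeq k (initSeg P n) := by
  simp only [IsFinBlockSeq, List.forall_mem_ofFn_iff, List.pairwise_ofFn]
  constructor
  · exact fun hP n => ⟨fun i => hP.1 i, fun i j hij => hP.2 i j hij⟩
  · exact fun h => ⟨fun n => (h (n + 1)).1 (Fin.last n),
      fun m n hmn => @(h (n + 1)).2 ⟨m, by omega⟩ (Fin.last n) hmn⟩

theorem branchesB_mono {U V : Set (List (ℕ → ℤ))} (h : U ⊆ V) : BranchesB k U ⊆ BranchesB k V :=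
  fun _ hP n => h (hP n)

namespace IsUTree

variable {U V : Set (List (ℕ → ℤ))} {r s : List (ℕ → ℤ)} {P : ℕ → ℕ → ℤ}

theorem isBlockSeq_of_mem_branches (hU : IsUTree k 𝒰 U s) (hP : P ∈ Branches U) :
    IsBlockSeq k P :=
  isBlockSeq_iff_forall_initSeg.2 fun n => hU.blocks _ (hP n)

theorem stem_prefix_initSeg (hU : IsUTree k 𝒰 U s) {n : ℕ} (hP : initSeg P n ∈ U)
    (hn : s.length ≤ n) : s <+: initSeg P n :=
  (hU.stemComparable _ hP).elim id fun h => h.eq_of_length_le (by simpa using hn) ▸ List.prefix_rfl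

theorem mem_branches_of_forall_ge (hU : IsUTree k 𝒰 U s) (N : ℕ)
    (h : ∀ n, N ≤ n → initSeg P n ∈ U) : P ∈ Branches U := fun n =>
  hU.prefixClosed _ (h (max N n) (le_max_left N n)) _ (initSeg_prefix_initSeg P (le_max_right N n))

theorem inter (hU : IsUTree k 𝒰 U s) (hV : IsUTree k 𝒰 V s) : IsUTree k 𝒰 (U ∩ V) s where
  blocks t ht := hU.blocks t ht.1
  prefixClosed t ht t' h := ⟨hU.prefixClosed t ht.1 t' h, hV.prefixClosed t ht.2 t' h⟩
  stemMem := ⟨hU.stemMem, hV.stemMem⟩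
  stemComparable t ht := hU.stemComparable t ht.1
  branch t ht hst := Filter.inter_mem (hU.branch t ht.1 hst) (hV.branch t ht.2 hst)

theorem exists_subtree_of_mem (hU : IsUTree k 𝒰 U s) (hr : r ∈ U) (hsr : s <+: r) :
    ∃ V ⊆ U, IsUTree k 𝒰 V r := by
  refine ⟨{t ∈ U | r <+: t ∨ t <+: r}, sep_subset _ _, ?_⟩
  exact
    { blocks := fun t ht => hU.blocks t ht.1
      prefixClosed := fun t ht t' h => ⟨hU.prefixClosed t ht.1 t' h,
        ht.2.elim (List.prefix_or_prefix_of_prefix · h) (Or.inr <| h.trans ·)⟩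
      stemMem := ⟨hr, Or.inl List.prefix_rfl⟩
      stemComparable := fun t ht => ht.2
      branch := fun t ht hrt => Filter.mem_of_superset (hU.branch t ht.1 (hsr.trans hrt))
        fun p hp => ⟨hp, Or.inl (hrt.trans (List.prefix_append t [p]))⟩ }

theorem exists_subtree_forall (hU : IsUTree k 𝒰 U s) (G : List (ℕ → ℤ) → Prop) (hs : G s)
    (hG : ∀ t ∈ U, s <+: t → G t → ∀ᶠ p in 𝒰, G (t ++ [p])) :
    ∃ V ⊆ U, IsUTree k 𝒰 V s ∧ ∀ t ∈ V, s <+: t → G t := by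
  refine ⟨{t ∈ U | ∀ r, s <+: r → r <+: t → G r}, sep_subset _ _, ?_,
    fun t ht hst => ht.2 t hst List.prefix_rfl⟩
  exact
    { blocks := fun t ht => hU.blocks t ht.1
      prefixClosed := fun t ht t' h =>
        ⟨hU.prefixClosed t ht.1 t' h, fun r hsr hrt => ht.2 r hsr (hrt.trans h)⟩
      stemMem := ⟨hU.stemMem, fun r hsr hrs => hsr.eq_of_length_le hrs.length_le ▸ hs⟩
      stemComparable := fun t ht => hU.stemComparable t ht.1
      branch := by
        rintro t ⟨htU, ht⟩ hst
        filter_upwards [hU.branch t htU hst, hG t htU hst (ht t hst List.prefix_rfl)] with p hpU hpG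
        refine ⟨hpU, fun r hsr hrp => ?_⟩
        rcases List.prefix_concat_iff.1 hrp with rfl | hrt
        · exact hpG
        · exact ht r hsr hrt }

theorem exists_fusion (hU : IsUTree k 𝒰 U s) {W : List (ℕ → ℤ) → Set (List (ℕ → ℤ))}
    (hW : ∀ r ∈ U, s <+: r → IsUTree k 𝒰 (W r) r) :
    ∃ V ⊆ U, IsUTree k 𝒰 V s ∧ ∀ t ∈ V, ∀ r, s <+: r → r <+: t → t ∈ W r := by
  obtain ⟨V, hVU, hV, hVW⟩ :=
    hU.exists_subtree_forall (fun t => ∀ r, s <+: r → r <+: t → t ∈ W r)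
      (fun r hsr hrs => by
        rw [← hsr.eq_of_length_le hrs.length_le]
        exact (hW s hU.stemMem List.prefix_rfl).stemMem)
      (fun t ht hst htW => by
        have old_stems : ∀ᶠ p in 𝒰, ∀ r ∈ {r | r <+: t}, s <+: r → t ++ [p] ∈ W r := by
          have hfin : {r | r <+: t}.Finite :=
            t.inits.finite_toSet.subset fun r hr => (List.mem_inits r t).2 hr
          refine (Filter.eventually_all_finite hfin).2 fun r hrt => ?_
          refine Filter.eventually_imp_distrib_left.2 fun hsr => ?_
          exact (hW r (hU.prefixClosed t ht r hrt) hsr).branch t (htW r hsr hrt) hrt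
        filter_upwards [hU.branch t ht hst, old_stems] with p hpU hpW r hsr hrp
        rcases List.prefix_concat_iff.1 hrp with rfl | hrt
        · exact (hW _ hpU hsr).stemMem
        · exact hpW r hrt hsr)
  exact ⟨V, hVU, hV, fun t ht r hsr hrt => hVW t ht (hsr.trans hrt) r hsr hrt⟩

theorem iUnion_append {A : Set (ℕ → ℤ)} (hA : A ∈ 𝒰)
    {V : (ℕ → ℤ) → Set (List (ℕ → ℤ))} (hV : ∀ p ∈ A, IsUTree k 𝒰 (V p) (s ++ [p])) :
    IsUTree k 𝒰 (⋃ p ∈ A, V p) s where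
  blocks t ht := by
    obtain ⟨p, hp, htp⟩ := mem_iUnion₂.1 ht
    exact (hV p hp).blocks t htp
  prefixClosed t ht t' h := by
    obtain ⟨p, hp, htp⟩ := mem_iUnion₂.1 ht
    exact mem_biUnion hp ((hV p hp).prefixClosed t htp t' h)
  stemMem := by
    obtain ⟨p, hp⟩ := 𝒰.nonempty_of_mem hA
    exact mem_biUnion hp ((hV p hp).prefixClosed _ (hV p hp).stemMem s (List.prefix_append s [p]))
  stemComparable t ht := by
    obtain ⟨p, hp, htp⟩ := mem_iUnion₂.1 ht
    rcases (hV p hp).stemComparable t htp with h | h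
    · exact Or.inl ((List.prefix_append s [p]).trans h)
    · exact List.prefix_or_prefix_of_prefix (List.prefix_append s [p]) h
  branch t ht hst := by
    obtain ⟨p, hp, htp⟩ := mem_iUnion₂.1 ht
    have hcases : s = t ∨ s ++ [p] <+: t := by
      rcases (hV p hp).stemComparable t htp with h | h
      · exact Or.inr h
      · rcases List.prefix_concat_iff.1 h with rfl | hts
        · exact Or.inr List.prefix_rfl
        · exact Or.inl (hst.eq_of_length_le hts.length_le)
    rcases hcases with rfl | hpt
    · filter_upwards [hA] with q hq using mem_biUnion hq (hV q hq).stemMem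
    · filter_upwards [(hV p hp).branch t htp hpt] with q hq using mem_biUnion hp hq

theorem exists_mem_branches_of_mem_iUnion_append {A : Set (ℕ → ℤ)}
    {V : (ℕ → ℤ) → Set (List (ℕ → ℤ))} (hV : ∀ p ∈ A, IsUTree k 𝒰 (V p) (s ++ [p]))
    (hP : P ∈ Branches (⋃ p ∈ A, V p)) : ∃ p ∈ A, P ∈ Branches (V p) := by
  obtain ⟨p, hp, hPp⟩ := mem_iUnion₂.1 (hP (s.length + 1))
  refine ⟨p, hp, (hV p hp).mem_branches_of_forall_ge (s.length + 1) fun n hn => ?_⟩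
  obtain ⟨q, hq, hPq⟩ := mem_iUnion₂.1 (hP n)
  have hpn : s ++ [p] <+: initSeg P n :=
    ((hV p hp).stem_prefix_initSeg hPp (by simp)).trans (initSeg_prefix_initSeg P hn)
  have hqn : s ++ [q] <+: initSeg P n := (hV q hq).stem_prefix_initSeg hPq (by simpa using hn)
  have hqp : q = p := by
    simpa using (List.prefix_of_prefix_length_le hqn hpn (by simp)).eq_of_length (by simp)
  exact hqp ▸ hPq

theorem branchesB_nonempty (hU : IsUTree k 𝒰 U s) : (BranchesB k U).Nonempty := by
  have hext : ∀ t ∈ U, s <+: t → ∃ p, t ++ [p] ∈ U := fun t ht hst =>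
    𝒰.nonempty_of_mem (hU.branch t ht hst)
  choose! child hchild using hext
  let T : ℕ → List (ℕ → ℤ) := fun n => (fun t => t ++ [child t])^[n] s
  have hT : ∀ n, T n = s ++ initSeg (fun i => child (T i)) n := by
    intro n
    induction n with
    | zero => simp [T]
    | succ n ih =>
      rw [initSeg_succ, ← List.append_assoc, ← ih]
      exact Function.iterate_succ_apply' _ n s
  have hTU : ∀ n, T n ∈ U := by
    intro n
    induction n with
    | zero => exact hU.stemMem
    | succ n ih =>
      have hst : s <+: T n := hT n ▸ List.prefix_append _ _
      simpa only [T, Function.iterate_succ_apply'] using hchild (T n) ih hst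
  obtain ⟨P, hP⟩ := exists_initSeg_add_eq_append s fun i => child (T i)
  have hPU : P ∈ Branches U := hU.mem_branches_of_forall_ge s.length fun n hn => by
    obtain ⟨m, rfl⟩ := Nat.exists_eq_add_of_le hn
    rw [hP, ← hT]
    exact hTU m
  exact ⟨⟨P, hU.isBlockSeq_of_mem_branches hPU⟩, hPU⟩

end IsUTree

theorem IsCofiniteUF.eventually_isFinBlockSeq_append (h𝒰 : IsCofiniteUF k 𝒰) {t : List (ℕ → ℤ)}
    (ht : IsFinBlockSeq k t) : ∀ᶠ p in 𝒰, IsFinBlockSeq k (t ++ [p]) := by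
  obtain ⟨M, hM⟩ : BddAbove (⋃ p ∈ {p | p ∈ t}, support p) :=
    (t.finite_toSet.biUnion fun p hp => (ht.1 p hp).1).bddAbove
  filter_upwards [h𝒰.1, h𝒰.2 (M + 1)] with q hq hq0
  have hblock : ∀ p ∈ t, BlockLt p q := fun p hp m n hm hn => by
    have hmM : m ≤ M := hM (mem_biUnion (show p ∈ {p | p ∈ t} from hp) hm)
    by_contra hnm
    exact hn (hq0 n (by omega))
  constructor
  · simpa only [List.mem_append, List.mem_singleton, or_imp, forall_and, forall_eq]
      using ⟨ht.1, hq⟩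
  · simpa only [List.pairwise_append, List.pairwise_singleton, true_and, List.mem_singleton,
      forall_eq] using ⟨ht.2, hblock⟩

theorem IsCofiniteUF.isUTree_isFinBlockSeq (h𝒰 : IsCofiniteUF k 𝒰) :
    IsUTree k 𝒰 {t | IsFinBlockSeq k t} [] where
  blocks _ ht := ht
  prefixClosed _ ht _ h := ⟨fun p hp => ht.1 p (h.subset hp), ht.2.sublist h.sublist⟩
  stemMem := ⟨by simp, List.Pairwise.nil⟩
  stemComparable _ _ := Or.inl List.nil_prefix
  branch _ ht _ := h𝒰.eventually_isFinBlockSeq_append ht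

/-- The finite block sequence `s` accepts `𝒳`: all branches of some `𝒰`-tree with stem `s` lie in
`𝒳`. This is the relation of combinatorial forcing through which `𝒰`-Ramsey sets are studied; the
tree need not lie inside a prescribed one, since two `𝒰`-trees with a common stem can be
intersected. -/
def Accepts (𝒰 : Ultrafilter (ℕ → ℤ)) (s : List (ℕ → ℤ)) (𝒳 : Set (BlockSeq k)) : Prop :=
  ∃ V, IsUTree k 𝒰 V s ∧ BranchesB k V ⊆ 𝒳

section Accepts

variable {U : Set (List (ℕ → ℤ))} {r s : List (ℕ → ℤ)} {𝒳 𝒴 : Set (BlockSeq k)}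

theorem Accepts.mono (h : Accepts 𝒰 s 𝒳) (h𝒳𝒴 : 𝒳 ⊆ 𝒴) : Accepts 𝒰 s 𝒴 := by
  obtain ⟨V, hV, hV𝒳⟩ := h
  exact ⟨V, hV, hV𝒳.trans h𝒳𝒴⟩

theorem Accepts.inter (h𝒳 : Accepts 𝒰 s 𝒳) (h𝒴 : Accepts 𝒰 s 𝒴) : Accepts 𝒰 s (𝒳 ∩ 𝒴) := by
  obtain ⟨V, hV, hV𝒳⟩ := h𝒳
  obtain ⟨W, hW, hW𝒴⟩ := h𝒴
  exact ⟨V ∩ W, hV.inter hW, subset_inter ((branchesB_mono inter_subset_left).trans hV𝒳)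
    ((branchesB_mono inter_subset_right).trans hW𝒴)⟩

theorem Accepts.exists_subtree (h : Accepts 𝒰 s 𝒳) (hU : IsUTree k 𝒰 U s) :
    ∃ U' ⊆ U, IsUTree k 𝒰 U' s ∧ BranchesB k U' ⊆ 𝒳 := by
  obtain ⟨V, hV, hV𝒳⟩ := h
  exact ⟨U ∩ V, inter_subset_left, hU.inter hV, (branchesB_mono inter_subset_right).trans hV𝒳⟩

theorem IsUTree.accepts_branchesB (hU : IsUTree k 𝒰 U s) (hr : r ∈ U) (hsr : s <+: r) :
    Accepts 𝒰 r (BranchesB k U) := by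
  obtain ⟨V, hVU, hV⟩ := hU.exists_subtree_of_mem hr hsr
  exact ⟨V, hV, branchesB_mono hVU⟩

theorem accepts_of_eventually_append (h : ∀ᶠ p in 𝒰, Accepts 𝒰 (s ++ [p]) 𝒳) :
    Accepts 𝒰 s 𝒳 := by
  have h' : ∀ p ∈ {p | Accepts 𝒰 (s ++ [p]) 𝒳},
      ∃ V, IsUTree k 𝒰 V (s ++ [p]) ∧ BranchesB k V ⊆ 𝒳 := fun _ hp => hp
  choose! V hV hV𝒳 using h'
  refine ⟨_, IsUTree.iUnion_append h hV, fun P hP => ?_⟩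
  obtain ⟨p, hp, hPp⟩ := IsUTree.exists_mem_branches_of_mem_iUnion_append hV hP
  exact hV𝒳 p hp hPp

theorem IsUTree.exists_subtree_forall_not_accepts (hU : IsUTree k 𝒰 U s)
    (hs : ¬ Accepts 𝒰 s 𝒳) :
    ∃ V ⊆ U, IsUTree k 𝒰 V s ∧ ∀ t ∈ V, s <+: t → ¬ Accepts 𝒰 t 𝒳 :=
  hU.exists_subtree_forall _ hs fun _ _ _ ht =>
    Ultrafilter.eventually_not.2 (mt accepts_of_eventually_append ht)

theorem IsUTree.accepts_iInter (hU : IsUTree k 𝒰 U s) {ι : Type*} [Countable ι]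
    {𝒴 : ι → Set (BlockSeq k)} (h : ∀ i, ∀ r ∈ U, s <+: r → Accepts 𝒰 r (𝒴 i)) :
    Accepts 𝒰 s (⋂ i, 𝒴 i) := by
  rcases isEmpty_or_nonempty ι with _ | _
  · exact ⟨U, hU, by simp only [iInter_of_empty, subset_univ]⟩
  obtain ⟨e, he⟩ := exists_surjective_nat ι
  -- Nodes at height `n` above the stem take care of the `n`-th set.
  choose! W hW hW𝒴 using fun r => h (e (r.length - s.length)) r
  obtain ⟨V, hVU, hV, hVW⟩ := hU.exists_fusion hW
  refine ⟨V, hV, fun P hP => mem_iInter.2 fun i => ?_⟩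
  obtain ⟨n, rfl⟩ := he i
  have hsP : s <+: initSeg P.1 (s.length + n) := hV.stem_prefix_initSeg (hP _) (by omega)
  have hPU : initSeg P.1 (s.length + n) ∈ U := hVU (hP _)
  have hPW : P ∈ BranchesB k (W (initSeg P.1 (s.length + n))) :=
    (hW _ hPU hsP).mem_branches_of_forall_ge (s.length + n) fun m hm =>
      hVW _ (hP m) _ hsP (initSeg_prefix_initSeg P.1 hm)
  simpa using hW𝒴 _ hPU hsP hPW

end Accepts

section Ramsey

variable {𝒳 𝒴 𝒪 : Set (BlockSeq k)}

theorem uRamsey_iff_accepts :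
    URamsey k 𝒰 𝒳 ↔ ∀ U s, IsUTree k 𝒰 U s → Accepts 𝒰 s 𝒳 ∨ Accepts 𝒰 s 𝒳ᶜ := by
  constructor
  · intro h U s hU
    obtain ⟨V, -, hV, h𝒳⟩ := h U s hU
    exact h𝒳.imp (⟨V, hV, ·⟩) (⟨V, hV, ·⟩)
  · intro h U s hU
    rcases h U s hU with h𝒳 | h𝒳
    · obtain ⟨V, hVU, hV, hV𝒳⟩ := h𝒳.exists_subtree hU
      exact ⟨V, hVU, hV, Or.inl hV𝒳⟩
    · obtain ⟨V, hVU, hV, hV𝒳⟩ := h𝒳.exists_subtree hU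
      exact ⟨V, hVU, hV, Or.inr hV𝒳⟩

theorem uRamseyNull_iff_accepts :
    URamseyNull k 𝒰 𝒳 ↔ ∀ U s, IsUTree k 𝒰 U s → Accepts 𝒰 s 𝒳ᶜ := by
  constructor
  · intro h U s hU
    obtain ⟨V, -, hV, hV𝒳⟩ := h U s hU
    exact ⟨V, hV, hV𝒳⟩
  · exact fun h U s hU => (h U s hU).exists_subtree hU

theorem URamseyNull.mono (h𝒴 : URamseyNull k 𝒰 𝒴) (h : 𝒳 ⊆ 𝒴) : URamseyNull k 𝒰 𝒳 :=
  uRamseyNull_iff_accepts.2 fun U s hU =>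
    (uRamseyNull_iff_accepts.1 h𝒴 U s hU).mono (compl_subset_compl.2 h)

theorem URamseyNull.iUnion {ι : Type*} [Countable ι] {𝒴 : ι → Set (BlockSeq k)}
    (h : ∀ i, URamseyNull k 𝒰 (𝒴 i)) : URamseyNull k 𝒰 (⋃ i, 𝒴 i) := by
  refine uRamseyNull_iff_accepts.2 fun U s hU => ?_
  rw [compl_iUnion]
  refine hU.accepts_iInter fun i r hr hsr => ?_
  obtain ⟨V, -, hV⟩ := hU.exists_subtree_of_mem hr hsr
  exact uRamseyNull_iff_accepts.1 (h i) V r hV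

theorem URamsey.of_uRamseyNull_symmDiff (h𝒪 : URamsey k 𝒰 𝒪)
    (h : URamseyNull k 𝒰 ((𝒳 \ 𝒪) ∪ (𝒪 \ 𝒳))) : URamsey k 𝒰 𝒳 := by
  refine uRamsey_iff_accepts.2 fun U s hU => ?_
  have hdiff := uRamseyNull_iff_accepts.1 h U s hU
  refine (uRamsey_iff_accepts.1 h𝒪 U s hU).imp (fun hs => (hs.inter hdiff).mono ?_)
    fun hs => (hs.inter hdiff).mono ?_
  · rintro P ⟨hP𝒪, hP⟩
    by_contra hP𝒳
    exact hP (Or.inr ⟨hP𝒪, hP𝒳⟩)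
  · rintro P ⟨hP𝒪, hP⟩ hP𝒳
    exact hP (Or.inl ⟨hP𝒳, hP𝒪⟩)

end Ramsey

section Topology

variable {U : Set (List (ℕ → ℤ))} {s : List (ℕ → ℤ)} {𝒳 𝒪 : Set (BlockSeq k)}

theorem IsUTree.isOpen_branchesB (hU : IsUTree k 𝒰 U s) : IsOpen[uTop k 𝒰] (BranchesB k U) :=
  TopologicalSpace.isOpen_generateFrom_of_mem ⟨U, s, hU, rfl⟩

theorem IsCofiniteUF.eventually_accepts_initSeg (h𝒰 : IsCofiniteUF k 𝒰)
    (h𝒪 : IsOpen[uTop k 𝒰] 𝒪) {P : BlockSeq k} (hP : P ∈ 𝒪) :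
    ∀ᶠ n in Filter.atTop, Accepts 𝒰 (initSeg P.1 n) 𝒪 := by
  change TopologicalSpace.GenerateOpen _ 𝒪 at h𝒪
  induction h𝒪 with
  | basic 𝒪 h =>
    obtain ⟨U, s, hU, rfl⟩ := h
    filter_upwards [Filter.eventually_ge_atTop s.length] with n hn
    exact hU.accepts_branchesB (hP n) (hU.stem_prefix_initSeg (hP n) hn)
  | univ =>
    refine Filter.Eventually.of_forall fun n => ?_
    have hn : IsFinBlockSeq k (initSeg P.1 n) := isBlockSeq_iff_forall_initSeg.1 P.2 n
    exact (h𝒰.isUTree_isFinBlockSeq.accepts_branchesB hn List.nil_prefix).mono (subset_univ _)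
  | inter 𝒳 𝒴 _ _ ih𝒳 ih𝒴 =>
    filter_upwards [ih𝒳 hP.1, ih𝒴 hP.2] with n h𝒳 h𝒴 using h𝒳.inter h𝒴
  | sUnion S _ ih =>
    obtain ⟨𝒴, h𝒴, hP𝒴⟩ := hP
    filter_upwards [ih 𝒴 h𝒴 hP𝒴] with n hn using hn.mono (subset_sUnion_of_mem h𝒴)

theorem IsCofiniteUF.exists_isUTree_branchesB_subset (h𝒰 : IsCofiniteUF k 𝒰)
    (h𝒪 : IsOpen[uTop k 𝒰] 𝒪) (hne : 𝒪.Nonempty) :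
    ∃ U s, IsUTree k 𝒰 U s ∧ BranchesB k U ⊆ 𝒪 := by
  obtain ⟨P, hP⟩ := hne
  obtain ⟨n, U, hU⟩ := (h𝒰.eventually_accepts_initSeg h𝒪 hP).exists
  exact ⟨U, initSeg P.1 n, hU⟩

theorem IsCofiniteUF.uRamsey_of_isOpen (h𝒰 : IsCofiniteUF k 𝒰) (h𝒪 : IsOpen[uTop k 𝒰] 𝒪) :
    URamsey k 𝒰 𝒪 := by
  refine uRamsey_iff_accepts.2 fun U s hU => or_iff_not_imp_left.2 fun hs => ?_
  obtain ⟨V, -, hV, hreject⟩ := hU.exists_subtree_forall_not_accepts hs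
  refine ⟨V, hV, fun P hP hP𝒪 => ?_⟩
  obtain ⟨n, haccept, hn⟩ := ((h𝒰.eventually_accepts_initSeg h𝒪 hP𝒪).and
    (Filter.eventually_ge_atTop s.length)).exists
  exact hreject _ (hP n) (hV.stem_prefix_initSeg (hP n) hn) haccept

theorem IsCofiniteUF.isNowhereDense_iff_uRamseyNull (h𝒰 : IsCofiniteUF k 𝒰) :
    @IsNowhereDense _ (uTop k 𝒰) 𝒳 ↔ URamseyNull k 𝒰 𝒳 := by
  let := uTop k 𝒰
  constructor
  · intro h𝒳
    refine uRamseyNull_iff_accepts.2 fun U s hU => ?_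
    rcases uRamsey_iff_accepts.1 (h𝒰.uRamsey_of_isOpen isClosed_closure.isOpen_compl) U s hU
      with hs | ⟨V, hV, hV𝒳⟩
    · exact hs.mono (compl_subset_compl.2 subset_closure)
    · rw [compl_compl] at hV𝒳
      obtain ⟨P, hP⟩ := hV.branchesB_nonempty
      have hP' : P ∈ interior (closure 𝒳) := interior_maximal hV𝒳 hV.isOpen_branchesB hP
      exact absurd hP' (eq_empty_iff_forall_notMem.1 h𝒳 P)
  · intro h𝒳
    by_contra hne
    obtain ⟨U, s, hU, hU𝒳⟩ := h𝒰.exists_isUTree_branchesB_subset isOpen_interior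
      (nonempty_iff_ne_empty.2 hne)
    obtain ⟨V, hVU, hV, hV𝒳⟩ := h𝒳 U s hU
    obtain ⟨P, hP⟩ := hV.branchesB_nonempty
    have hP𝒳 : P ∈ closure 𝒳 := interior_subset (hU𝒳 (branchesB_mono hVU hP))
    obtain ⟨Q, hQV, hQ𝒳⟩ := mem_closure_iff.1 hP𝒳 _ hV.isOpen_branchesB hP
    exact hV𝒳 hQV hQ𝒳

theorem IsCofiniteUF.isMeagre_iff_uRamseyNull (h𝒰 : IsCofiniteUF k 𝒰) :
    @IsMeagre _ (uTop k 𝒰) 𝒳 ↔ URamseyNull k 𝒰 𝒳 := by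
  let := uTop k 𝒰
  rw [← h𝒰.isNowhereDense_iff_uRamseyNull]
  refine ⟨fun h => ?_, IsNowhereDense.isMeagre⟩
  obtain ⟨S, hS, hScount, h𝒳S⟩ := isMeagre_iff_countable_union_isNowhereDense.1 h
  have : Countable S := hScount.to_subtype
  rw [sUnion_eq_iUnion] at h𝒳S
  exact h𝒰.isNowhereDense_iff_uRamseyNull.2 <| URamseyNull.mono
    (URamseyNull.iUnion fun i : S => h𝒰.isNowhereDense_iff_uRamseyNull.1 (hS i i.2)) h𝒳S

theorem URamsey.exists_isOpen_uRamseyNull_symmDiff (h𝒳 : URamsey k 𝒰 𝒳) :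
    ∃ 𝒪, IsOpen[uTop k 𝒰] 𝒪 ∧ URamseyNull k 𝒰 ((𝒳 \ 𝒪) ∪ (𝒪 \ 𝒳)) := by
  let := uTop k 𝒰
  refine ⟨interior 𝒳, isOpen_interior, ?_⟩
  rw [sdiff_eq_empty.2 interior_subset, union_empty]
  refine uRamseyNull_iff_accepts.2 fun U s hU => ?_
  rcases uRamsey_iff_accepts.1 h𝒳 U s hU with ⟨V, hV, hV𝒳⟩ | hs
  · exact ⟨V, hV, fun P hP hP𝒳 => hP𝒳.2 (interior_maximal hV𝒳 hV.isOpen_branchesB hP)⟩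
  · exact hs.mono (compl_subset_compl.2 sdiff_subset)

end Topology

end UltraEllentuck

theorem ultra_Ellentuck_general (k : ℕ) (𝒰 : Ultrafilter (ℕ → ℤ)) (h𝒰 : IsCofiniteUF k 𝒰)
    (𝒳 : Set (BlockSeq k)) :
    ((∃ O : Set (BlockSeq k), @IsOpen _ (uTop k 𝒰) O ∧
        @IsMeagre _ (uTop k 𝒰) ((𝒳 \ O) ∪ (O \ 𝒳))) ↔ URamsey k 𝒰 𝒳) ∧
    (@IsMeagre _ (uTop k 𝒰) 𝒳 ↔ URamseyNull k 𝒰 𝒳) := by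
  simp only [h𝒰.isMeagre_iff_uRamseyNull, and_true]
  constructor
  · rintro ⟨O, hO, hdiff⟩
    exact (h𝒰.uRamsey_of_isOpen hO).of_uRamseyNull_symmDiff hdiff
  · exact URamsey.exists_isOpen_uRamseyNull_symmDiff

/-- ultra-Ellentuck theorem for `FIN_{±k}^[∞]`: `𝒳` has the property of
Baire in the `𝒰`-topology iff `𝒳` is `𝒰`-Ramsey, and `𝒳` is `𝒰`-meager iff `𝒳` is
`𝒰`-Ramsey null. -/
theorem ultra_Ellentuck (k : ℕ) (hk : 1 ≤ k) (𝒰 : Ultrafilter (ℕ → ℤ))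
    (h𝒰 : IsGowersUF k 𝒰) (𝒳 : Set (BlockSeq k)) :
    ((∃ O : Set (BlockSeq k), @IsOpen _ (uTop k 𝒰) O ∧
        @IsMeagre _ (uTop k 𝒰) ((𝒳 \ O) ∪ (O \ 𝒳))) ↔ URamsey k 𝒰 𝒳) ∧
    (@IsMeagre _ (uTop k 𝒰) 𝒳 ↔ URamseyNull k 𝒰 𝒳) :=
  ultra_Ellentuck_general k 𝒰 h𝒰.1 𝒳
end

section
/- Let 𝒰 be a cofinite subsymmetric ultrafilter on FIN_{±k} with 𝒰 + (−T)^j 𝒰 = (−T)^j 𝒰 + 𝒰 = 𝒰 for all j ≤ k. For every 𝒰-tree U with stem ∅ there exist an infinite block sequence P = (p_n)_{n<ω} in FIN_{±k} and a decreasing sequence A₀ ⊇ A₁ ⊇ ⋯ of subsets of FIN_{±k} such that: (1) for every n, A_n ⊆ U_t ∩ −(U_t)₁ for every t ∈ U with supp(⋃t) ⊆ ⋃_{i<n} supp p_i; and (2) ⟨p_m, …, p_n⟩_{(−T)} ⊆ A_m for all m ≤ n < ω. -/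
open Function Set

/-!
Choose `p_n ∈ A_n` and shrink `A_n` to `A_{n+1} ∈ 𝒰` so that every `q ∈ A_{n+1}` satisfies
`p_n < q`, `p_n + (-T)^j q ∈ A_n` and `(-T)^j p_n + q ∈ A_n` for `j ≤ k`, which idempotence allows.
Condition (1) asks for membership in the sets `U_t ∩ -(U_t)₁ ∈ 𝒰`; only finitely many nodes `t` have
support below `max supp p_n`, so `A_{n+1}` can be chosen inside all of them.
For condition (2), one shows by downward induction on the blocks that every sum
`∑ (-T)^{e_i} p_{n_i}` with `n_i ≥ m` is `(-T)^l` of an element of `A_m`, where `l = min e_i`: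
if `r = (-T)^l q` with `q ∈ A_{n+1}`, then `(-T)^e p_n + r` is `(-T)^e (p_n + (-T)^{l-e} q)` or
`(-T)^l ((-T)^{e-l} p_n + q)`. On the span `⟨p_m, …, p_n⟩_{(-T)}` the exponent `l` is `0`.
-/

theorem list_sum_eq_of_pairwise_eq_zero {M : Type*} [AddMonoid M] {l : List M}
    (hl : l.Pairwise fun a b => a = 0 ∨ b = 0) {a : M} (hal : a ∈ l) (ha : a ≠ 0) :
    l.sum = a := by
  induction l with
  | nil => exact absurd hal List.not_mem_nil
  | cons b l ih =>
    rw [List.pairwise_cons] at hl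
    rw [List.sum_cons]
    rcases List.mem_cons.1 hal with rfl | hal
    · rw [List.sum_eq_zero fun c hc => (hl.1 c hc).resolve_left ha, add_zero]
    · rw [(hl.1 a hal).resolve_right ha, zero_add, ih hl.2 hal]

theorem finite_setOf_nodup_forall_mem {α : Type*} {s : Set α} (hs : s.Finite) :
    {l : List α | l.Nodup ∧ ∀ a ∈ l, a ∈ s}.Finite := by
  classical
  have := hs.fintype
  refine (finite_range fun l : {l : List s // l.Nodup} => l.1.map Subtype.val).subset ?_
  rintro l ⟨hnodup, hmem⟩
  lift l to List s using hmem
  exact ⟨⟨l, hnodup.of_map _⟩, rfl⟩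

theorem exists_fusion_sequence {α : Type*} {F : Filter α} [F.NeBot] {R : Set α → α → α → Prop}
    (hR : ∀ A ∈ F, ∀ᶠ p in F, ∀ᶠ q in F, R A p q) {A₀ : Set α} (hA₀ : A₀ ∈ F) :
    ∃ (P : ℕ → α) (A : ℕ → Set α), A 0 = A₀ ∧ Antitone A ∧ (∀ n, P n ∈ A n) ∧
      ∀ n, ∀ q ∈ A (n + 1), R (A n) (P n) q := by
  have hpick : ∀ A : {A : Set α // A ∈ F}, ∃ p ∈ A.1, ∀ᶠ q in F, R A p q := fun A =>
    ((Filter.eventually_mem_set.2 A.2).and (hR A A.2)).exists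
  choose pick hmem hpick using hpick
  let next (A : {A : Set α // A ∈ F}) : {A : Set α // A ∈ F} :=
    ⟨A ∩ {q | R A (pick A) q}, Filter.inter_mem A.2 (hpick A)⟩
  let A (n : ℕ) : {A : Set α // A ∈ F} := next^[n] ⟨A₀, hA₀⟩
  have hsucc (n : ℕ) : A (n + 1) = next (A n) := iterate_succ_apply' next n _
  refine ⟨fun n => pick (A n), fun n => A n, rfl, antitone_nat_of_succ_le fun n => ?_,
    fun n => hmem _, fun n q hq => ?_⟩
  · rw [hsucc]
    exact inter_subset_left
  · have hq' : q ∈ (next (A n)).1 := hsucc n ▸ hq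
    exact hq'.2

section Tetris

variable {k : ℕ} {p q : ℕ → ℤ}

theorem BlockLt.disjoint_support (h : BlockLt p q) : Disjoint (support p) (support q) :=
  Set.disjoint_left.2 fun n hp hq => (h n n hp hq).false

theorem support_negT_subset (p : ℕ → ℤ) : support (negT p) ⊆ support p := by
  intro n hn hp
  simp [negT, tetris, hp] at hn

theorem support_negT_iterate_subset (i : ℕ) (p : ℕ → ℤ) : support (negT^[i] p) ⊆ support p := by
  induction i generalizing p with
  | zero => rfl
  | succ i ih => exact (ih (negT p)).trans (support_negT_subset p)

theorem negT_add_of_disjoint (h : Disjoint (support p) (support q)) :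
    negT (p + q) = negT p + negT q := by
  funext n
  by_cases hp : p n = 0
  · simp [negT, tetris, hp]
  · have hq : q n = 0 := notMem_support.1 (Set.disjoint_left.1 h hp)
    simp [negT, tetris, hq]

theorem negT_iterate_add_of_disjoint (i : ℕ) (h : Disjoint (support p) (support q)) :
    negT^[i] (p + q) = negT^[i] p + negT^[i] q := by
  induction i generalizing p q with
  | zero => rfl
  | succ i ih =>
    rw [iterate_succ_apply, negT_add_of_disjoint h,
      ih (h.mono (support_negT_subset p) (support_negT_subset q))]
    rfl

end Tetris

section Span

/-- The relation between a block `p`, chosen in the current set `A`, and the elements `q`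
of the next set: `p < q`, and all the sums `p + (-T)^j q` and `(-T)^j p + q` with `j ≤ k` are
in `A`. -/
def CombinesInto (k : ℕ) (A : Set (ℕ → ℤ)) (p q : ℕ → ℤ) : Prop :=
  BlockLt p q ∧ ∀ j ≤ k, p + negT^[j] q ∈ A ∧ negT^[j] p + q ∈ A

variable {k : ℕ}

theorem CombinesInto.exists_negT_iterate_add_eq {A : Set (ℕ → ℤ)} {p q : ℕ → ℤ}
    (h : CombinesInto k A p q) {a b : ℕ} (ha : a ≤ k) (hb : b ≤ k) :
    ∃ r ∈ A, negT^[a] p + negT^[b] q = negT^[a ⊓ b] r := by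
  obtain ⟨hlt, hmem⟩ := h
  rcases le_total a b with hab | hba
  · refine ⟨p + negT^[b - a] q, (hmem (b - a) (by omega)).1, ?_⟩
    rw [inf_eq_left.2 hab, negT_iterate_add_of_disjoint a
      (hlt.disjoint_support.mono_right (support_negT_iterate_subset _ _)),
      ← iterate_add_apply, Nat.add_sub_cancel' hab]
  · refine ⟨negT^[a - b] p + q, (hmem (a - b) (by omega)).2, ?_⟩
    rw [inf_eq_right.2 hba, negT_iterate_add_of_disjoint b
      (hlt.disjoint_support.mono_left (support_negT_iterate_subset _ _)),
      ← iterate_add_apply, Nat.add_sub_cancel' hba]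

theorem exists_sum_negT_iterate_eq {P : ℕ → ℕ → ℤ} {A : ℕ → Set (ℕ → ℤ)} (hA : Antitone A)
    (hPA : ∀ n, P n ∈ A n) (hcomb : ∀ n, ∀ q ∈ A (n + 1), CombinesInto k (A n) (P n) q)
    {ι : Type*} [LinearOrder ι] {s : Finset ι} (hs : s.Nonempty) {n e : ι → ℕ} {m : ℕ}
    (hn : StrictMonoOn n s) (hm : ∀ i ∈ s, m ≤ n i) (he : ∀ i ∈ s, e i ≤ k) :
    ∃ r ∈ A m, ∑ i ∈ s, negT^[e i] (P (n i)) = negT^[s.inf' hs e] r := by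
  induction s using Finset.induction_on_min generalizing m with
  | empty => exact absurd hs Finset.not_nonempty_empty
  | insert a s has ih =>
    simp only [Finset.forall_mem_insert] at hm he
    rcases s.eq_empty_or_nonempty with rfl | hs'
    · exact ⟨P (n a), hA hm.1 (hPA _), by simp⟩
    · have hna : ∀ i ∈ s, n a + 1 ≤ n i := fun i hi =>
        hn (Finset.mem_insert_self a s) (Finset.mem_insert_of_mem hi) (has i hi)
      obtain ⟨i, hi, hmin⟩ := s.exists_mem_eq_inf' hs' e
      obtain ⟨q, hq, hsum⟩ := ih hs' (hn.mono (Finset.subset_insert a s)) hna he.2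
      obtain ⟨r, hr, heq⟩ := (hcomb (n a) q hq).exists_negT_iterate_add_eq he.1
        (hmin.trans_le (he.2 i hi))
      refine ⟨r, hA hm.1 hr, ?_⟩
      rw [Finset.sum_insert fun h => (has a h).false, hsum, heq, Finset.inf'_insert hs']

theorem InSpanNegTRange.mem {P : ℕ → ℕ → ℤ} {A : ℕ → Set (ℕ → ℤ)} (hA : Antitone A)
    (hPA : ∀ n, P n ∈ A n) (hcomb : ∀ n, ∀ q ∈ A (n + 1), CombinesInto k (A n) (P n) q)
    {a b : ℕ} (hq : InSpanNegTRange k P a b q) : q ∈ A a := by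
  obtain ⟨m, n, j, hn, hrange, hj, ⟨i, hi⟩, rfl⟩ := hq
  obtain ⟨r, hr, hsum⟩ := exists_sum_negT_iterate_eq hA hPA hcomb Finset.univ_nonempty
    (hn.strictMonoOn _) (fun i _ => (hrange i).1) (fun i _ => (hj i).le)
  have hmin : Finset.univ.inf' Finset.univ_nonempty j = 0 :=
    Nat.le_zero.1 ((Finset.inf'_le j (Finset.mem_univ i)).trans_eq hi)
  rwa [hsum, hmin]

end Span

theorem IsIdempotentUF.eventually_combinesInto {k : ℕ} {𝒰 : Ultrafilter (ℕ → ℤ)}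
    (h𝒰 : IsIdempotentUF k 𝒰) {A : Set (ℕ → ℤ)} (hA : A ∈ 𝒰) :
    ∀ᶠ p in 𝒰, ∀ᶠ q in 𝒰, CombinesInto k A p q := by
  have hleft (j : ℕ) (hj : j ∈ Iic k) :
      ∀ᶠ p in 𝒰, ∀ᶠ q in 𝒰, BlockLt p (negT^[j] q) ∧ p + negT^[j] q ∈ A :=
    (h𝒰 j hj A).1.2 hA
  have hright (j : ℕ) (hj : j ∈ Iic k) :
      ∀ᶠ p in 𝒰, ∀ᶠ q in 𝒰, BlockLt (negT^[j] p) q ∧ negT^[j] p + q ∈ A :=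
    (h𝒰 j hj A).2.2 hA
  filter_upwards [hleft 0 k.zero_le, (Filter.eventually_all_finite (finite_Iic k)).2 hleft,
    (Filter.eventually_all_finite (finite_Iic k)).2 hright] with p hlt hl hr
  filter_upwards [hlt, (Filter.eventually_all_finite (finite_Iic k)).2 hl,
    (Filter.eventually_all_finite (finite_Iic k)).2 hr] with q hlt hl hr
  exact ⟨hlt.1, fun j hj => ⟨(hl j hj).2, (hr j hj).2⟩⟩

section Trees

variable {k : ℕ} {𝒰 : Ultrafilter (ℕ → ℤ)} {U : Set (List (ℕ → ℤ))} {S : Set ℕ}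

theorem support_subset_support_list_sum {t : List (ℕ → ℤ)} (ht : t.Pairwise BlockLt)
    {p : ℕ → ℤ} (hp : p ∈ t) : support p ⊆ support t.sum := by
  intro m hm
  have hzero : (t.map (· m)).Pairwise fun a b => a = 0 ∨ b = 0 :=
    List.pairwise_map.2 <| ht.imp fun h => by
      by_contra! hne
      exact (h m m hne.1 hne.2).false
  rwa [mem_support, Pi.list_sum_apply,
    list_sum_eq_of_pairwise_eq_zero hzero (List.mem_map_of_mem hp) hm]

theorem finite_setOf_normLe_support_subset (k : ℕ) (hS : S.Finite) :
    {p : ℕ → ℤ | normLe p k ∧ support p ⊆ S}.Finite := by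
  have := hS.to_subtype
  refine Set.Finite.of_finite_image (f := S.domRestrict) ?_ fun p hp q hq hpq => ?_
  · refine (Set.Finite.pi' fun _ : S => finite_Icc (-k : ℤ) k).subset ?_
    rintro _ ⟨p, hp, rfl⟩ n
    exact abs_le.1 (hp.1 n)
  · funext n
    by_cases hn : n ∈ S
    · exact congrFun hpq ⟨n, hn⟩
    · rw [notMem_support.1 fun h => hn (hp.2 h), notMem_support.1 fun h => hn (hq.2 h)]

theorem IsFin.support_nonempty {p : ℕ → ℤ} (hp : IsFin k p) (hk : 1 ≤ k) :
    (support p).Nonempty := by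
  obtain ⟨n, hn⟩ := hp.2.2
  exact ⟨n, abs_pos.1 (by omega)⟩

theorem IsFinBlockSeq.nodup {t : List (ℕ → ℤ)} (ht : IsFinBlockSeq k t) (hk : 1 ≤ k) :
    t.Nodup := by
  refine ht.2.imp_of_mem ?_
  rintro p _ hp - hlt rfl
  obtain ⟨n, hn⟩ := (ht.1 p hp).support_nonempty hk
  exact (hlt n n hn hn).false

theorem finite_setOf_isFinBlockSeq_support_sum_subset (hk : 1 ≤ k) (hS : S.Finite) :
    {t | IsFinBlockSeq k t ∧ support t.sum ⊆ S}.Finite :=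
  (finite_setOf_nodup_forall_mem (finite_setOf_normLe_support_subset k hS)).subset
    fun _ ⟨ht, htS⟩ => ⟨ht.nodup hk, fun p hp =>
      ⟨(ht.1 p hp).2.1, (support_subset_support_list_sum ht.2 hp).trans htS⟩⟩

/-- The set `U_t ∩ -(U_t)₁` of condition (1), where `U_t = {p | t⌢p ∈ U}`. -/
def symmSucc (U : Set (List (ℕ → ℤ))) (t : List (ℕ → ℤ)) : Set (ℕ → ℤ) :=
  {p | t ++ [p] ∈ U} ∩ {p | -p ∈ approx 1 {q | t ++ [q] ∈ U}}

theorem IsUTree.eventually_mem_symmSucc (hU : IsUTree k 𝒰 U []) (h𝒰 : IsSubsymmetric 𝒰)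
    (hk : 1 ≤ k) (hS : S.Finite) :
    ∀ᶠ p in 𝒰, ∀ t ∈ U, support t.sum ⊆ S → p ∈ symmSucc U t := by
  have hfin : {t | t ∈ U ∧ support t.sum ⊆ S}.Finite :=
    (finite_setOf_isFinBlockSeq_support_sum_subset hk hS).subset
      fun t ht => ⟨hU.blocks t ht.1, ht.2⟩
  have hall : ∀ᶠ p in 𝒰, ∀ t ∈ {t | t ∈ U ∧ support t.sum ⊆ S}, p ∈ symmSucc U t :=
    (Filter.eventually_all_finite hfin).2 fun t ht =>
      have hbranch := hU.branch t ht.1 List.nil_prefix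
      Filter.inter_mem hbranch (h𝒰 _ hbranch)
  exact hall.mono fun p hp t htU htS => hp t ⟨htU, htS⟩

end Trees

theorem IsBlockSeq.support_subset_lowerClosure {k : ℕ} {P : ℕ → ℕ → ℤ} (hP : IsBlockSeq k P)
    (hk : 1 ≤ k) {i n : ℕ} (hin : i ≤ n) : support (P i) ⊆ lowerClosure (support (P n)) := by
  rcases hin.eq_or_lt with rfl | hlt
  · exact subset_lowerClosure
  · intro a ha
    obtain ⟨b, hb⟩ := (hP.1 n).support_nonempty hk
    exact mem_lowerClosure.2 ⟨b, hb, (hP.2 i n hlt a b ha hb).le⟩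

/-- for every `𝒰`-tree `U` with stem `∅` there are an infinite block
sequence `P = (p_n)` and a decreasing sequence `A₀ ⊇ A₁ ⊇ ⋯` of subsets of `FIN_{±k}`
such that (1) `A_n ⊆ U_t ∩ −(U_t)₁` for every `t ∈ U` with
`supp(⋃t) ⊆ ⋃_{i<n} supp p_i`, and (2) `⟨p_m, …, p_n⟩_{(−T)} ⊆ A_m` for `m ≤ n`. -/
theorem UTree_block_sequence_with_sets (k : ℕ) (hk : 1 ≤ k) (𝒰 : Ultrafilter (ℕ → ℤ))
    (h𝒰 : IsGowersUF k 𝒰) (U : Set (List (ℕ → ℤ))) (hU : IsUTree k 𝒰 U []) :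
    ∃ (P : ℕ → ℕ → ℤ) (A : ℕ → Set (ℕ → ℤ)), IsBlockSeq k P ∧
      (∀ n : ℕ, A (n + 1) ⊆ A n) ∧
      (∀ n : ℕ, ∀ t ∈ U, (∀ m : ℕ, t.sum m ≠ 0 → ∃ i < n, P i m ≠ 0) →
        A n ⊆ {p | t ++ [p] ∈ U} ∩ {p | -p ∈ approx 1 {q | t ++ [q] ∈ U}}) ∧
      (∀ m n : ℕ, m ≤ n → ∀ q : ℕ → ℤ, InSpanNegTRange k P m n q → q ∈ A m) := by
  obtain ⟨⟨hFin, -⟩, hsubsymm, hidem⟩ := h𝒰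
  have hA₀ : ∀ᶠ p in 𝒰, IsFin k p ∧ ∀ t ∈ U, support t.sum ⊆ ∅ → p ∈ symmSucc U t :=
    (Filter.eventually_mem_set.2 hFin).and (hU.eventually_mem_symmSucc hsubsymm hk finite_empty)
  have hR : ∀ A ∈ 𝒰, ∀ᶠ p in 𝒰, ∀ᶠ q in 𝒰, CombinesInto k A p q ∧
      ∀ t ∈ U, support t.sum ⊆ lowerClosure (support p) → q ∈ symmSucc U t := by
    intro A hA
    filter_upwards [hidem.eventually_combinesInto hA, hFin] with p hcomb hp
    exact hcomb.and (hU.eventually_mem_symmSucc hsubsymm hk hp.1.bddAbove.lowerClosure.finite)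
  obtain ⟨P, A, hA0, hanti, hPA, hstep⟩ := exists_fusion_sequence hR hA₀
  have hzero : ∀ q ∈ A 0, IsFin k q ∧ ∀ t ∈ U, support t.sum ⊆ ∅ → q ∈ symmSucc U t :=
    fun q hq => hA0.subset hq
  have hP : IsBlockSeq k P :=
    ⟨fun n => (hzero _ (hanti n.zero_le (hPA n))).1,
      fun m n hmn => (hstep m _ (hanti hmn (hPA n))).1.1⟩
  refine ⟨P, A, hP, fun n => hanti n.le_succ, fun n t ht hsupp q hq => ?_,
    fun m n _ q hq => hq.mem hanti hPA fun n q hq => (hstep n q hq).1⟩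
  cases n with
  | zero => exact (hzero q hq).2 t ht fun m hm => by simpa using hsupp m hm
  | succ n =>
    refine (hstep n q hq).2 t ht fun m hm => ?_
    obtain ⟨i, hi, him⟩ := hsupp m hm
    exact hP.support_subset_lowerClosure hk (Nat.lt_succ_iff.1 hi) him
end

section
/- For each m ∈ ℕ, m ≥ 1, the map Φ_m : FIN_{±2m} → FIN_{±m} is a surjective homomorphism of partial semigroups (i.e. it is surjective, and Φ_m(p + q) = Φ_m(p) + Φ_m(q) whenever p < q in FIN_{±2m}) which moreover satisfies Φ_m(−p) = −Φ_m(p) for every p ∈ FIN_{±2m}. -/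
open Function Set

/-!
`Φ` divides each coordinate by two, truncating towards zero. Any coordinatewise map fixing `0` is
additive on blocks, because at each coordinate at most one of the two blocks is nonzero; oddness is
that of truncated division, and doubling every coordinate is a right inverse of `Φ`.
-/

lemma abs_tdiv (a b : ℤ) : |a.tdiv b| = |a| / |b| := by
  rw [Int.abs_eq_natAbs, Int.natAbs_tdiv, Int.abs_eq_natAbs, Int.abs_eq_natAbs]
  exact Int.natCast_ediv _ _

lemma BlockLt.eq_zero_or_eq_zero {p q : ℕ → ℤ} (hpq : BlockLt p q) (n : ℕ) :
    p n = 0 ∨ q n = 0 := by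
  by_contra! hne
  exact lt_irrefl n (hpq n n hne.1 hne.2)

lemma BlockLt.comp_add {M : Type*} [AddZeroClass M] {g : ℤ → M} {p q : ℕ → ℤ}
    (hpq : BlockLt p q) (hg : g 0 = 0) : g ∘ (p + q) = g ∘ p + g ∘ q := by
  funext n
  rcases hpq.eq_zero_or_eq_zero n with hp | hq
  · simp [hp, hg]
  · simp [hq, hg]

lemma IsFin.comp {k l : ℕ} {g : ℤ → ℤ} {p : ℕ → ℤ} (hp : IsFin k p) (hg : g 0 = 0)
    (hle : ∀ x : ℤ, |x| ≤ k → |g x| ≤ l) (heq : ∀ x : ℤ, |x| = k → |g x| = l) :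
    IsFin l (g ∘ p) := by
  obtain ⟨hfin, hbound, n, hn⟩ := hp
  exact ⟨hfin.subset (support_comp_subset hg p), fun i => hle _ (hbound i), n, heq _ hn⟩

lemma IsFin.nsmul {k : ℕ} {p : ℕ → ℤ} (hp : IsFin k p) (d : ℕ) : IsFin (d * k) (d • p) := by
  refine hp.comp (g := (d • ·)) (smul_zero d) (fun x hx => ?_) (fun x hx => ?_)
  · rw [abs_nsmul, nsmul_eq_mul, Nat.cast_mul]
    gcongr
  · rw [abs_nsmul, hx, nsmul_eq_mul, Nat.cast_mul]

lemma IsFin.tdiv {d k : ℕ} {p : ℕ → ℤ} (hd : 0 < d) (hp : IsFin (d * k) p) :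
    IsFin k ((Int.tdiv · d) ∘ p) := by
  have hd' : (0 : ℤ) < d := mod_cast hd
  refine hp.comp (Int.zero_tdiv _) (fun x hx => ?_) (fun x hx => ?_)
  · rw [abs_tdiv, Nat.abs_cast]
    exact Int.ediv_le_of_le_mul hd' (by rwa [mul_comm, ← Nat.cast_mul])
  · rw [abs_tdiv, Nat.abs_cast, hx, Nat.cast_mul, Int.mul_ediv_cancel_left _ hd'.ne']

lemma Phi_eq_tdiv_two_comp (p : ℕ → ℤ) : Phi p = (Int.tdiv · 2) ∘ p := by
  funext n
  simp only [Phi, comp_apply, Int.tdiv_eq_ediv, Int.sign_eq_one_of_pos two_pos]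
  split_ifs <;> omega

lemma IsFin.Phi {m : ℕ} {p : ℕ → ℤ} (hp : IsFin (2 * m) p) : IsFin m (Phi p) := by
  rw [Phi_eq_tdiv_two_comp]
  exact hp.tdiv two_pos

lemma Phi_two_nsmul (q : ℕ → ℤ) : Phi (2 • q) = q := by
  funext n
  simp [Phi_eq_tdiv_two_comp]

lemma Phi_add_of_blockLt {p q : ℕ → ℤ} (hpq : BlockLt p q) : Phi (p + q) = Phi p + Phi q := by
  simp only [Phi_eq_tdiv_two_comp]
  exact hpq.comp_add (Int.zero_tdiv 2)

lemma Phi_neg (p : ℕ → ℤ) : Phi (-p) = -Phi p := by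
  funext n
  simp only [Phi_eq_tdiv_two_comp, comp_apply, Pi.neg_apply, Int.neg_tdiv]

/-- `Φ_m : FIN_{±2m} → FIN_{±m}` is a surjective homomorphism of partial
semigroups satisfying `Φ_m(−p) = −Φ_m(p)`. -/
theorem Phi_surjective_homomorphism (m : ℕ) (hm : 1 ≤ m) :
    (∀ p : ℕ → ℤ, IsFin (2 * m) p → IsFin m (Phi p)) ∧
    (∀ q : ℕ → ℤ, IsFin m q → ∃ p : ℕ → ℤ, IsFin (2 * m) p ∧ Phi p = q) ∧
    (∀ p q : ℕ → ℤ, IsFin (2 * m) p → IsFin (2 * m) q → BlockLt p q →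
      Phi (p + q) = Phi p + Phi q) ∧
    (∀ p : ℕ → ℤ, IsFin (2 * m) p → Phi (-p) = -Phi p) :=
  ⟨fun _ hp => hp.Phi,
    fun q hq => ⟨2 • q, hq.nsmul 2, Phi_two_nsmul q⟩,
    fun _ _ _ _ hpq => Phi_add_of_blockLt hpq,
    fun p _ => Phi_neg p⟩
end
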